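/- Let f : ℝ^{m×n} → ℝ be twice continuously differentiable, let X₀ = U S Vᵀ with U ∈ ℝ^{m×r}, V ∈ ℝ^{n×r} having orthonormal columns, let P(Z) = Z V Vᵀ + U Uᵀ Z (I_n − V Vᵀ), and let Z ∈ ℝ^{m×n} be an element of the tangent set at X₀ (so P(Z) = Z). Define w : ℝ^{m×n} → ℝ by w(Y) = ⟨P(∇f(Y)), Z⟩, where the projection P uses the fixed point X₀. Let H ∈ ℝ^{m×n} be the matrix representing the Euclidean Hessian of f at X₀ applied to Z, i.e., ⟨H, E⟩ = D²f(X₀)[Z, E] for all E ∈ ℝ^{m×n}. Then the Euclidean gradient of w at X₀ satisfies P(∇w(X₀)) = P(H), i.e., the Riemannian gradient of w at X₀ equals the approximate Riemannian Hessian of f at X₀ applied to Z. -/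

import Mathlib

open Matrix

attribute [local instance] Matrix.normedAddCommGroup Matrix.normedSpace

/-!
The projection `P` is self-adjoint and fixes `Z`, so `w(Y) = ⟨∇f(Y), P Z⟩ = Df(Y)[Z]`.
Differentiating at `X₀` in the direction `E` gives `D²f(X₀)[E, Z] = ⟨H, E⟩`, by the symmetry of the
second derivative. Hence already the Euclidean gradient of `w` at `X₀` is `H`.
-/

section SecondDerivative

variable {𝕜 E F : Type*} [NontriviallyNormedField 𝕜]
  [NormedAddCommGroup E] [NormedSpace 𝕜 E] [NormedAddCommGroup F] [NormedSpace 𝕜 F]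

theorem fderiv_fderiv_apply_const {f : E → F} {x : E} {k : WithTop ℕ∞}
    (hf : ContDiffAt 𝕜 k f x) (hk : minSmoothness 𝕜 2 ≤ k) (v : E) :
    fderiv 𝕜 (fun y ↦ fderiv 𝕜 f y v) x = fderiv 𝕜 (fderiv 𝕜 f) x v := by
  have hdiff : DifferentiableAt 𝕜 (fderiv 𝕜 f) x :=
    (hf.fderiv_right (m := 1) (le_minSmoothness.trans hk)).differentiableAt one_ne_zero
  ext e
  calc fderiv 𝕜 (fun y ↦ fderiv 𝕜 f y v) x e
    _ = fderiv 𝕜 (fderiv 𝕜 f) x e v := by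
      simp [fderiv_clm_apply hdiff (differentiableAt_const v)]
    _ = fderiv 𝕜 (fderiv 𝕜 f) x v e := (hf.isSymmSndFDerivAt hk).eq e v

theorem stmt_12_general {B : LinearMap.BilinForm 𝕜 E} (hB : B.SeparatingLeft)
    {P : E → E} (hP : B.IsSelfAdjoint P)
    {f : E → 𝕜} {x : E} {k : WithTop ℕ∞} (hf : ContDiffAt 𝕜 k f x) (hk : minSmoothness 𝕜 2 ≤ k)
    {G : E → E} (hG : ∀ y e, fderiv 𝕜 f y e = B (G y) e) {z : E} (hz : P z = z)
    {w : E → 𝕜} (hw : ∀ y, w y = B (P (G y)) z)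
    {h : E} (hh : ∀ e, B h e = fderiv 𝕜 (fderiv 𝕜 f) x z e)
    {gw : E} (hgw : ∀ e, fderiv 𝕜 w x e = B gw e) :
    gw = h := by
  have hw_eq : w = fun y ↦ fderiv 𝕜 f y z := by
    funext y
    rw [hw, hP, hz, hG]
  have B_injective : Function.Injective B :=
    LinearMap.ker_eq_bot.mp (LinearMap.separatingLeft_iff_ker_eq_bot.mp hB)
  refine B_injective (LinearMap.ext fun e ↦ ?_)
  rw [← hgw, hw_eq, fderiv_fderiv_apply_const hf hk, hh]

end SecondDerivative

section FrobeniusForm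

variable {l m n p r R : Type*} [Fintype l] [Fintype m] [Fintype n] [Fintype p] [Fintype r]

/-- The Frobenius inner product `⟨A, B⟩ = tr (Aᵀ B)` on matrices, as a bilinear form. It is defined
algebraically because the norm carried by matrices here is the entrywise supremum norm. -/
def frobeniusForm [CommSemiring R] : LinearMap.BilinForm R (Matrix m n R) :=
  LinearMap.mk₂ R (fun A B ↦ (Aᵀ * B).trace)
    (fun A A' B ↦ by rw [transpose_add, Matrix.add_mul, trace_add])
    (fun c A B ↦ by rw [transpose_smul, Matrix.smul_mul, trace_smul])
    (fun A B B' ↦ by rw [Matrix.mul_add, trace_add])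
    (fun c A B ↦ by rw [Matrix.mul_smul, trace_smul])

theorem frobeniusForm_apply [CommSemiring R] (A B : Matrix m n R) :
    frobeniusForm A B = (Aᵀ * B).trace :=
  rfl

theorem frobeniusForm_eq_sum [CommSemiring R] (A B : Matrix m n R) :
    frobeniusForm A B = ∑ i, ∑ j, A i j * B i j :=
  Finset.sum_comm

theorem separatingLeft_frobeniusForm [CommSemiring R] :
    (frobeniusForm : LinearMap.BilinForm R (Matrix m n R)).SeparatingLeft := by
  intro A hA
  refine transpose_eq_zero.mp (ext_iff_trace_mul_right.mpr fun B ↦ ?_)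
  rw [← frobeniusForm_apply, hA, Matrix.zero_mul, trace_zero]

theorem isAdjointPair_frobeniusForm_mul_mul [CommSemiring R] (L : Matrix l m R)
    (K : Matrix n p R) :
    LinearMap.IsAdjointPair frobeniusForm frobeniusForm
      (fun A : Matrix m n R ↦ L * A * K) (fun B ↦ Lᵀ * B * Kᵀ) := fun A B ↦
  calc ((L * A * K)ᵀ * B).trace
    _ = (Kᵀ * (Aᵀ * (Lᵀ * B))).trace := by simp only [transpose_mul, Matrix.mul_assoc]
    _ = (Aᵀ * (Lᵀ * B * Kᵀ)).trace := by rw [trace_mul_comm, Matrix.mul_assoc]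

/-- For `U` and `V` with orthonormal columns, the orthogonal projection onto the tangent space of
the fixed-rank matrices at `U S Vᵀ`; it does not depend on the invertible factor `S`. -/
def tangentProj [CommRing R] [DecidableEq n] (U : Matrix m r R) (V : Matrix n r R)
    (Z : Matrix m n R) : Matrix m n R :=
  Z * V * Vᵀ + U * Uᵀ * Z * (1 - V * Vᵀ)

theorem isSelfAdjoint_tangentProj [CommRing R] [DecidableEq n] (U : Matrix m r R)
    (V : Matrix n r R) : frobeniusForm.IsSelfAdjoint (tangentProj U V) := by
  classical
  have h := (isAdjointPair_frobeniusForm_mul_mul (1 : Matrix m m R) (V * Vᵀ)).add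
    (isAdjointPair_frobeniusForm_mul_mul (U * Uᵀ) (1 - V * Vᵀ))
  intro A B
  simpa [tangentProj, Matrix.mul_assoc] using h A B

end FrobeniusForm

/-- Let `f : ℝ^{m×n} → ℝ` be C², `X₀ = U S Vᵀ` with `U, V` having orthonormal columns,
`P` the tangent-space projection at `X₀`, and `Z` a tangent vector (`P Z = Z`).
Let `G Y` be the Euclidean gradient of `f` at `Y` (`Df(Y)[E] = ⟨G Y, E⟩`), and define
`w(Y) = ⟨P(∇f(Y)), Z⟩` (the projection `P` uses the fixed point `X₀`). Let `H`
represent the Euclidean Hessian of `f` at `X₀` applied to `Z`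
(`⟨H, E⟩ = D²f(X₀)[Z, E]`). Then the Riemannian gradient of `w` at `X₀` equals the
approximate Riemannian Hessian of `f` at `X₀` applied to `Z`: `P(∇w(X₀)) = P(H)`. -/
theorem stmt_12 {m n r : ℕ}
    (U : Matrix (Fin m) (Fin r) ℝ) (V : Matrix (Fin n) (Fin r) ℝ)
    (S : Matrix (Fin r) (Fin r) ℝ)
    (hU : Uᵀ * U = 1) (hV : Vᵀ * V = 1)
    (X₀ : Matrix (Fin m) (Fin n) ℝ) (hX₀ : X₀ = U * S * Vᵀ)
    (P : Matrix (Fin m) (Fin n) ℝ → Matrix (Fin m) (Fin n) ℝ)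
    (hP : ∀ Z, P Z = Z * V * Vᵀ + U * Uᵀ * Z * (1 - V * Vᵀ))
    (f : Matrix (Fin m) (Fin n) ℝ → ℝ) (hf : ContDiff ℝ 2 f)
    (G : Matrix (Fin m) (Fin n) ℝ → Matrix (Fin m) (Fin n) ℝ)
    (hG : ∀ Y E, fderiv ℝ f Y E = ∑ i, ∑ j, (G Y) i j * E i j)
    (Z : Matrix (Fin m) (Fin n) ℝ) (hZ : P Z = Z)
    (w : Matrix (Fin m) (Fin n) ℝ → ℝ)
    (hw : ∀ Y, w Y = ∑ i, ∑ j, (P (G Y)) i j * Z i j)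
    (H : Matrix (Fin m) (Fin n) ℝ)
    (hH : ∀ E, ∑ i, ∑ j, H i j * E i j = fderiv ℝ (fderiv ℝ f) X₀ Z E)
    (Gw : Matrix (Fin m) (Fin n) ℝ)
    (hGw : ∀ E, fderiv ℝ w X₀ E = ∑ i, ∑ j, Gw i j * E i j) :
    P Gw = P H := by
  obtain rfl : P = tangentProj U V := funext hP
  simp only [← frobeniusForm_eq_sum] at hG hw hH hGw
  exact congrArg _ (stmt_12_general separatingLeft_frobeniusForm (isSelfAdjoint_tangentProj U V)
    hf.contDiffAt minSmoothness_of_isRCLikeNormedField.le hG hZ hw hH hGw)
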